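/- arXiv:2210.13789 — 11 statements merged into one kernel-verified Lean document; each statement's English description precedes it below -/
import Mathlib

section
/- Let X and Y be complex Banach spaces and let N be a norm on the algebraic tensor product X ⊗ Y which is a reasonable cross norm, i.e. N(x ⊗ y) = ‖x‖·‖y‖ for all x ∈ X, y ∈ Y, and for all continuous linear functionals φ ∈ X* and ψ ∈ Y* with ‖φ‖ ≤ 1 and ‖ψ‖ ≤ 1 one has |(φ ⊗ ψ)(u)| ≤ N(u) for every u ∈ X ⊗ Y (where (φ ⊗ ψ)(x ⊗ y) = φ(x)ψ(y)). If x₁, x₂ ∈ X satisfy x₁ ⊥_BJ x₂, then for any y₁, y₂ ∈ Y and every scalar α ∈ ℂ, N((x₁ ⊗ y₁) + α·(x₂ ⊗ y₂)) ≥ N(x₁ ⊗ y₁); that is, x₁ ⊗ y₁ is Birkhoff-James orthogonal to x₂ ⊗ y₂ with respect to N. -/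
open scoped TensorProduct

/-- Let `X` and `Y` be complex Banach spaces and `N` a reasonable cross
norm on the algebraic tensor product `X ⊗ Y`.  If `x₁ ⊥_BJ x₂` then
`x₁ ⊗ y₁ ⊥_BJ x₂ ⊗ y₂` with respect to `N`. -/
theorem stmt0
    {X Y : Type*} [NormedAddCommGroup X] [NormedSpace ℂ X] [CompleteSpace X]
    [NormedAddCommGroup Y] [NormedSpace ℂ Y] [CompleteSpace Y]
    (N : X ⊗[ℂ] Y → ℝ)
    -- `N` is a norm:
    (N_triangle : ∀ u v : X ⊗[ℂ] Y, N (u + v) ≤ N u + N v)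
    (N_smul : ∀ (c : ℂ) (u : X ⊗[ℂ] Y), N (c • u) = ‖c‖ * N u)
    (N_eq_zero : ∀ u : X ⊗[ℂ] Y, N u = 0 ↔ u = 0)
    -- `N` is a cross norm:
    (N_cross : ∀ (x : X) (y : Y), N (x ⊗ₜ[ℂ] y) = ‖x‖ * ‖y‖)
    -- the dual condition for a reasonable cross norm:
    (N_dual : ∀ (φ : X →L[ℂ] ℂ) (ψ : Y →L[ℂ] ℂ), ‖φ‖ ≤ 1 → ‖ψ‖ ≤ 1 →
      ∀ u : X ⊗[ℂ] Y,
        ‖TensorProduct.lift ((LinearMap.mul ℂ ℂ).compl₁₂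
            (φ : X →ₗ[ℂ] ℂ) (ψ : Y →ₗ[ℂ] ℂ)) u‖ ≤ N u)
    (x₁ x₂ : X) (hBJ : ∀ α : ℂ, ‖x₁ + α • x₂‖ ≥ ‖x₁‖)
    (y₁ y₂ : Y) :
    ∀ α : ℂ, N ((x₁ ⊗ₜ[ℂ] y₁) + α • (x₂ ⊗ₜ[ℂ] y₂)) ≥ N (x₁ ⊗ₜ[ℂ] y₁) := by
  intro α
  rw [N_cross]
  by_cases hy : ‖y₁‖ = 0
  · have h := N_dual 0 0 (by simp) (by simp) (x₁ ⊗ₜ[ℂ] y₁ + α • (x₂ ⊗ₜ[ℂ] y₂))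
    rw [hy, mul_zero]
    exact le_trans (norm_nonneg _) h
  obtain ⟨ψ, hψ, hψy⟩ := exists_dual_vector'' ℂ y₁
  have hy' : (‖y₁‖ : ℂ) ≠ 0 := by exact_mod_cast hy
  obtain ⟨φ, hφ, hφx⟩ := exists_dual_vector'' ℂ (x₁ + (α * ψ y₂ / (‖y₁‖ : ℂ)) • x₂)
  have h := N_dual φ ψ hφ hψ (x₁ ⊗ₜ[ℂ] y₁ + α • (x₂ ⊗ₜ[ℂ] y₂))
  have e : TensorProduct.lift ((LinearMap.mul ℂ ℂ).compl₁₂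
      (φ : X →ₗ[ℂ] ℂ) (ψ : Y →ₗ[ℂ] ℂ)) (x₁ ⊗ₜ[ℂ] y₁ + α • (x₂ ⊗ₜ[ℂ] y₂))
      = φ (x₁ + (α * ψ y₂ / (‖y₁‖ : ℂ)) • x₂) * (‖y₁‖ : ℂ) := by
    simp only [map_add, map_smul, TensorProduct.lift.tmul, LinearMap.compl₁₂_apply,
      LinearMap.mul_apply', ContinuousLinearMap.coe_coe, smul_eq_mul]
    rw [hψy]
    simp only [Complex.coe_algebraMap, RCLike.ofReal_eq_complex_ofReal]
    field_simp
  rw [e, hφx, norm_mul] at h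
  simp only [RCLike.norm_ofReal, Complex.norm_real, abs_norm, norm_norm] at h
  exact le_trans (mul_le_mul_of_nonneg_right (hBJ _) (norm_nonneg _)) h
end

section
/- Let K₁ and K₂ be compact Hausdorff topological spaces and let f₁, f₂ ∈ C(K₁, ℂ) and g₁, g₂ ∈ C(K₂, ℂ) be continuous complex-valued functions (with supremum norm). If f₁ ⊥_BJ f₂ in C(K₁, ℂ), then the function F₁ : K₁ × K₂ → ℂ, F₁(s,t) = f₁(s)·g₁(t), is Birkhoff-James orthogonal in C(K₁ × K₂, ℂ) to F₂(s,t) = f₂(s)·g₂(t); that is, ‖F₁ + α F₂‖_∞ ≥ ‖F₁‖_∞ for every α ∈ ℂ. -/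
/-- For compact Hausdorff spaces `K₁, K₂` and complex-valued continuous
functions `f₁, f₂` on `K₁` and `g₁, g₂` on `K₂`, if `f₁ ⊥_BJ f₂` in `C(K₁, ℂ)`, then the
function `(s,t) ↦ f₁ s * g₁ t` is Birkhoff-James orthogonal to `(s,t) ↦ f₂ s * g₂ t` in
`C(K₁ × K₂, ℂ)`. -/
theorem stmt1
    {K₁ K₂ : Type*} [TopologicalSpace K₁] [CompactSpace K₁] [T2Space K₁]
    [TopologicalSpace K₂] [CompactSpace K₂] [T2Space K₂]
    (f₁ f₂ : C(K₁, ℂ)) (g₁ g₂ : C(K₂, ℂ))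
    (hBJ : ∀ α : ℂ, ‖f₁ + α • f₂‖ ≥ ‖f₁‖) :
    ∀ α : ℂ,
      ‖(f₁.comp ContinuousMap.fst * g₁.comp ContinuousMap.snd) +
          α • (f₂.comp ContinuousMap.fst * g₂.comp ContinuousMap.snd)‖ ≥
        ‖f₁.comp ContinuousMap.fst * g₁.comp ContinuousMap.snd‖ := by
  intro α
  refine (ContinuousMap.norm_le _ (norm_nonneg _)).2 ?_
  rintro ⟨s, t⟩
  by_cases h : g₁ t = 0
  · simp [h]
  have h0 : 0 < ‖g₁ t‖ := norm_pos_iff.2 h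
  set N := ‖(f₁.comp ContinuousMap.fst * g₁.comp ContinuousMap.snd) +
          α • (f₂.comp ContinuousMap.fst * g₂.comp ContinuousMap.snd)‖ with hN
  have h1 : ‖f₁ + (α * g₂ t / g₁ t) • f₂‖ ≤ N / ‖g₁ t‖ := by
    refine (ContinuousMap.norm_le _ (div_nonneg (norm_nonneg _) h0.le)).2 ?_
    intro x
    rw [le_div_iff₀ h0, ← norm_mul]
    have h2 := ContinuousMap.norm_coe_le_norm
      ((f₁.comp ContinuousMap.fst * g₁.comp ContinuousMap.snd) +
          α • (f₂.comp ContinuousMap.fst * g₂.comp ContinuousMap.snd)) (x, t)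
    rw [← hN] at h2
    refine le_trans (le_of_eq ?_) h2
    congr 1
    simp
    field_simp
  have h3 : ‖f₁ s‖ ≤ N / ‖g₁ t‖ :=
    (f₁.norm_coe_le_norm s).trans ((hBJ _).trans h1)
  rw [le_div_iff₀ h0, ← norm_mul] at h3
  simpa using h3
end

section
/- Consider the functions on the three-point set {0,1,2} with values in ℂ, equipped with the supremum norm: f₁ = (1, 1+2i, 1−2i), f₂ = (1, 1, 1), g₁ = (1, −1+2i, −1−2i), g₂ = (2, 2, 2). Then: (i) f₁ is NOT Birkhoff-James orthogonal to f₂, i.e. there exists α ∈ ℂ with ‖f₁ + α f₂‖_∞ < ‖f₁‖_∞; (ii) g₁ is NOT Birkhoff-James orthogonal to g₂; (iii) nevertheless, the function F₁ : {0,1,2} × {0,1,2} → ℂ, F₁(s,t) = f₁(s)·g₁(t), IS Birkhoff-James orthogonal to F₂(s,t) = f₂(s)·g₂(t) in the supremum norm, i.e. ‖F₁ + α F₂‖_∞ ≥ ‖F₁‖_∞ = 5 for every α ∈ ℂ. -/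
open Complex

/-- On the three-point set `Fin 3` with the supremum norm, let
`f₁ = (1, 1+2i, 1−2i)`, `f₂ = (1,1,1)`, `g₁ = (1, −1+2i, −1−2i)`, `g₂ = (2,2,2)`.
Then `f₁` is not Birkhoff-James orthogonal to `f₂`, `g₁` is not Birkhoff-James orthogonal
to `g₂`, yet the elementary tensor `(s,t) ↦ f₁ s * g₁ t` (of norm `5`) is Birkhoff-James
orthogonal to `(s,t) ↦ f₂ s * g₂ t` in the supremum norm. -/
theorem stmt2
    (f₁ f₂ g₁ g₂ : Fin 3 → ℂ)
    (hf₁ : f₁ = ![1, 1 + 2 * I, 1 - 2 * I])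
    (hf₂ : f₂ = ![1, 1, 1])
    (hg₁ : g₁ = ![1, -1 + 2 * I, -1 - 2 * I])
    (hg₂ : g₂ = ![2, 2, 2])
    (F₁ F₂ : Fin 3 × Fin 3 → ℂ)
    (hF₁ : F₁ = fun p => f₁ p.1 * g₁ p.2)
    (hF₂ : F₂ = fun p => f₂ p.1 * g₂ p.2) :
    (∃ α : ℂ, ‖f₁ + α • f₂‖ < ‖f₁‖) ∧
    (∃ α : ℂ, ‖g₁ + α • g₂‖ < ‖g₁‖) ∧
    ‖F₁‖ = 5 ∧
    (∀ α : ℂ, ‖F₁ + α • F₂‖ ≥ ‖F₁‖) := by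
  have key : ∀ (z : ℂ) (r : ℝ), 0 ≤ r → r ^ 2 ≤ z.re ^ 2 + z.im ^ 2 → r ≤ ‖z‖ := by
    intro z r hr h
    refine (abs_le_of_sq_le_sq' ?_ (norm_nonneg z)).2
    rw [← Complex.normSq_eq_norm_sq, Complex.normSq_apply]
    linarith
  have key2 : ∀ (z : ℂ) (r : ℝ), 0 ≤ r → z.re ^ 2 + z.im ^ 2 ≤ r ^ 2 → ‖z‖ ≤ r := by
    intro z r hr h
    refine (abs_le_of_sq_le_sq' ?_ hr).2
    rw [← Complex.normSq_eq_norm_sq, Complex.normSq_apply]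
    linarith
  have hF5 : ‖F₁‖ ≤ 5 := by
    rw [pi_norm_le_iff_of_nonneg (by norm_num)]
    rintro ⟨s, t⟩
    apply key2 _ _ (by norm_num)
    subst hF₁ hf₁ hg₁
    fin_cases s <;> fin_cases t <;> simp <;> norm_num
  have hmain : ∀ α : ℂ, 5 ≤ ‖F₁ + α • F₂‖ := by
    intro α
    subst hF₁ hF₂ hf₁ hf₂ hg₁ hg₂
    rcases le_total α.re 0 with hx | hx
    · refine le_trans ?_ (norm_le_pi_norm _ ((1, 1) : Fin 3 × Fin 3))
      apply key _ _ (by norm_num)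
      simp
      nlinarith [sq_nonneg α.re, sq_nonneg α.im]
    · rcases le_total α.im 0 with hy | hy
      · refine le_trans ?_ (norm_le_pi_norm _ ((1, 2) : Fin 3 × Fin 3))
        apply key _ _ (by norm_num)
        simp
        nlinarith [sq_nonneg α.re, sq_nonneg α.im]
      · refine le_trans ?_ (norm_le_pi_norm _ ((2, 1) : Fin 3 × Fin 3))
        apply key _ _ (by norm_num)
        simp
        nlinarith [sq_nonneg α.re, sq_nonneg α.im]
  have h5 : ‖F₁‖ = 5 := le_antisymm hF5 (by simpa using hmain 0)
  refine ⟨⟨-1, ?_⟩, ⟨1 / 2, ?_⟩, h5, fun α => h5 ▸ hmain α⟩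
  · apply lt_of_le_of_lt (b := 2)
    · rw [pi_norm_le_iff_of_nonneg (by norm_num)]
      intro s
      apply key2 _ _ (by norm_num)
      subst hf₁ hf₂
      fin_cases s <;> simp <;> norm_num
    · apply lt_of_lt_of_le (b := 2.1) (by norm_num)
      refine le_trans ?_ (norm_le_pi_norm _ (1 : Fin 3))
      apply key _ _ (by norm_num)
      subst hf₁
      simp
      norm_num
  · apply lt_of_le_of_lt (b := 2)
    · rw [pi_norm_le_iff_of_nonneg (by norm_num)]
      intro s
      apply key2 _ _ (by norm_num)
      subst hg₁ hg₂
      fin_cases s <;> simp <;> norm_num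
    · apply lt_of_lt_of_le (b := 2.1) (by norm_num)
      refine le_trans ?_ (norm_le_pi_norm _ (1 : Fin 3))
      apply key _ _ (by norm_num)
      subst hg₁
      simp
      norm_num
end

section
/- In the space C([0,1] × [0,1], ℂ) of continuous complex-valued functions on the unit square with supremum norm, let F(x,y) = x and G(x,y) = y. Then: (i) F ⊥_BJ G, i.e. ‖F + μ G‖_∞ ≥ ‖F‖_∞ = 1 for all μ ∈ ℂ; (ii) in C([0,1], ℂ), the identity function Id(x) = x is NOT Birkhoff-James orthogonal to the constant function 1, since ‖Id − (1/2)·1‖_∞ = 1/2 < 1 = ‖Id‖_∞; (iii) in C([0,1], ℂ), the constant function 1 IS Birkhoff-James orthogonal to Id, i.e. ‖1 + μ·Id‖_∞ ≥ 1 for all μ ∈ ℂ. -/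
open unitInterval

/-- In `C([0,1] × [0,1], ℂ)` with the supremum norm, `F(x,y) = x` is
Birkhoff-James orthogonal to `G(x,y) = y` (and `‖F‖ = 1`); in `C([0,1], ℂ)` the identity
function is not Birkhoff-James orthogonal to the constant function `1`
(indeed `‖Id − (1/2)·1‖ = 1/2 < 1 = ‖Id‖`), while `1` is Birkhoff-James orthogonal
to the identity function. -/
theorem stmt3
    (F G : C(I × I, ℂ))
    (hF : ∀ p : I × I, F p = ((p.1 : ℝ) : ℂ))
    (hG : ∀ p : I × I, G p = ((p.2 : ℝ) : ℂ))
    (Id : C(I, ℂ)) (hId : ∀ x : I, Id x = ((x : ℝ) : ℂ)) :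
    (‖F‖ = 1 ∧ ∀ μ : ℂ, ‖F + μ • G‖ ≥ ‖F‖) ∧
    (‖Id - ((1 : ℂ) / 2) • (1 : C(I, ℂ))‖ = 1 / 2 ∧ ‖Id‖ = 1 ∧
      ¬ (∀ μ : ℂ, ‖Id + μ • (1 : C(I, ℂ))‖ ≥ ‖Id‖)) ∧
    (∀ μ : ℂ, ‖(1 : C(I, ℂ)) + μ • Id‖ ≥ ‖(1 : C(I, ℂ))‖) := by
  have nF : ‖F‖ = 1 := by
    apply le_antisymm
    · rw [ContinuousMap.norm_le _ zero_le_one]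
      intro p
      rw [hF, Complex.norm_real, Real.norm_eq_abs, abs_of_nonneg p.1.2.1]
      exact p.1.2.2
    · have h := F.norm_coe_le_norm ((1 : I), (0 : I))
      rw [hF] at h
      simpa using h
  have nId : ‖Id‖ = 1 := by
    apply le_antisymm
    · rw [ContinuousMap.norm_le _ zero_le_one]
      intro p
      rw [hId, Complex.norm_real, Real.norm_eq_abs, abs_of_nonneg p.2.1]
      exact p.2.2
    · have h := Id.norm_coe_le_norm (1 : I)
      rw [hId] at h
      simpa using h
  have nH : ‖Id - ((1 : ℂ) / 2) • (1 : C(I, ℂ))‖ = 1 / 2 := by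
    have e : ∀ x : I, (Id - ((1 : ℂ) / 2) • (1 : C(I, ℂ))) x = (((x : ℝ) - 1 / 2 : ℝ) : ℂ) := by
      intro x
      simp [hId]
    apply le_antisymm
    · rw [ContinuousMap.norm_le _ (by norm_num)]
      intro x
      rw [e, Complex.norm_real, Real.norm_eq_abs, abs_le]
      have h0 := x.2.1
      have h1 := x.2.2
      constructor <;> linarith
    · have h := (Id - ((1 : ℂ) / 2) • (1 : C(I, ℂ))).norm_coe_le_norm (1 : I)
      rw [e, Complex.norm_real, Real.norm_eq_abs] at h
      refine le_trans ?_ h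
      norm_num
  refine ⟨⟨nF, fun μ => ?_⟩, ⟨nH, nId, fun h => ?_⟩, fun μ => ?_⟩
  · rw [nF]
    have h := (F + μ • G).norm_coe_le_norm ((1 : I), (0 : I))
    simpa [hF, hG] using h
  · have h1 := h (-((1 : ℂ) / 2))
    have e : Id + (-((1 : ℂ) / 2)) • (1 : C(I, ℂ)) = Id - ((1 : ℂ) / 2) • (1 : C(I, ℂ)) := by
      ext x
      simp [sub_eq_add_neg]
    rw [e, nH, nId] at h1
    norm_num at h1
  · have h := ((1 : C(I, ℂ)) + μ • Id).norm_coe_le_norm (0 : I)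
    rw [norm_one]
    simpa [hId] using h
end

section
/- Equip square complex matrices with the spectral norm (the operator norm induced by the Euclidean ℓ² norm). Let A = [[1,0],[0,2]], B = [[1,0],[0,0]], C = [[1,1],[1,0]] in M₂(ℂ), let I₂ be the 2×2 identity, and let P = A ⊗ B and Q = C ⊗ I₂ be the 4×4 Kronecker products, so P = [[1,0,0,0],[0,0,0,0],[0,0,2,0],[0,0,0,0]] and Q = [[1,0,1,0],[0,1,0,1],[1,0,0,0],[0,1,0,0]]. Then: (i) P ⊥_BJ Q in M₄(ℂ) with the spectral norm; (ii) A ⊥_BJ C in M₂(ℂ); (iii) B is NOT Birkhoff-James orthogonal to I₂, e.g. ‖B − (1/2)I₂‖ = 1/2 < 1 = ‖B‖. -/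
open Kronecker
open scoped Matrix.Norms.L2Operator

/-- Each entry is bounded by the spectral norm. -/
lemma entry_le_opNorm {n : Type*} [Fintype n] [DecidableEq n] (M : Matrix n n ℂ) (i j : n) :
    ‖M i j‖ ≤ ‖M‖ := by
  have h := Matrix.l2_opNorm_mulVec M (EuclideanSpace.single j (1 : ℂ))
  have h2 := PiLp.norm_apply_le (WithLp.toLp 2 (M.mulVec (EuclideanSpace.single j (1 : ℂ)).ofLp)) i
  simp at h h2
  exact h2.trans h

/-- With the spectral norm on square complex matrices, for
`A = [[1,0],[0,2]]`, `B = [[1,0],[0,0]]`, `C = [[1,1],[1,0]]` and the Kronecker products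
`P = A ⊗ B`, `Q = C ⊗ I₂`: `P ⊥_BJ Q` in `M₄(ℂ)`, `A ⊥_BJ C` in `M₂(ℂ)`, but `B` is not
Birkhoff-James orthogonal to `I₂` (indeed `‖B − (1/2)I₂‖ = 1/2 < 1 = ‖B‖`). -/
theorem stmt4
    (A B C : Matrix (Fin 2) (Fin 2) ℂ)
    (hA : A = !![1, 0; 0, 2]) (hB : B = !![1, 0; 0, 0]) (hC : C = !![1, 1; 1, 0])
    (P Q : Matrix (Fin 2 × Fin 2) (Fin 2 × Fin 2) ℂ)
    (hP : P = A ⊗ₖ B) (hQ : Q = C ⊗ₖ (1 : Matrix (Fin 2) (Fin 2) ℂ)) :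
    (∀ α : ℂ, ‖P + α • Q‖ ≥ ‖P‖) ∧
    (∀ α : ℂ, ‖A + α • C‖ ≥ ‖A‖) ∧
    (‖B - ((1 : ℂ) / 2) • (1 : Matrix (Fin 2) (Fin 2) ℂ)‖ = 1 / 2 ∧ ‖B‖ = 1 ∧
      ¬ (∀ α : ℂ, ‖B + α • (1 : Matrix (Fin 2) (Fin 2) ℂ)‖ ≥ ‖B‖)) := by
  have hAd : A = Matrix.diagonal ![1, 2] := by
    rw [hA]; ext i j; fin_cases i <;> fin_cases j <;> simp
  have hBd : B = Matrix.diagonal ![1, 0] := by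
    rw [hB]; ext i j; fin_cases i <;> fin_cases j <;> simp
  have hDd : B - ((1 : ℂ) / 2) • (1 : Matrix (Fin 2) (Fin 2) ℂ)
      = Matrix.diagonal ![1 / 2, -(1 / 2)] := by
    rw [hB]; ext i j; fin_cases i <;> fin_cases j <;> norm_num
  have hAn : ‖A‖ ≤ 2 := by
    rw [hAd, Matrix.l2_opNorm_diagonal, pi_norm_le_iff_of_nonneg (by norm_num)]
    intro i; fin_cases i <;> simp
  have hPn : ‖P‖ ≤ 2 := by
    rw [hP, hAd, hBd, Matrix.diagonal_kronecker_diagonal, Matrix.l2_opNorm_diagonal,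
      pi_norm_le_iff_of_nonneg (by norm_num)]
    rintro ⟨i, j⟩; fin_cases i <;> fin_cases j <;> simp
  have hBn : ‖B‖ = 1 := by
    apply le_antisymm
    · rw [hBd, Matrix.l2_opNorm_diagonal, pi_norm_le_iff_of_nonneg (by norm_num)]
      intro i; fin_cases i <;> simp
    · have h := entry_le_opNorm B 0 0
      rw [hB] at h ⊢
      simpa using h
  have hDn : ‖B - ((1 : ℂ) / 2) • (1 : Matrix (Fin 2) (Fin 2) ℂ)‖ = 1 / 2 := by
    rw [hDd]
    apply le_antisymm
    · rw [Matrix.l2_opNorm_diagonal, pi_norm_le_iff_of_nonneg (by norm_num)]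
      intro i; fin_cases i <;> simp
    · have h := entry_le_opNorm (Matrix.diagonal ![(1 / 2 : ℂ), -(1 / 2)]) 0 0
      simpa using h
  refine ⟨fun α => ?_, fun α => ?_, hDn, hBn, fun h => ?_⟩
  · refine hPn.trans ?_
    have h := entry_le_opNorm (P + α • Q) (1, 0) (1, 0)
    have e : (P + α • Q) (1, 0) (1, 0) = 2 := by
      simp [hP, hQ, hA, hB, hC, Matrix.kroneckerMap_apply]
    rw [e] at h
    simpa using h
  · refine hAn.trans ?_
    have h := entry_le_opNorm (A + α • C) 1 1
    have e : (A + α • C) 1 1 = 2 := by simp [hA, hC]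
    rw [e] at h
    simpa using h
  · have h1 := h (-(1 / 2))
    rw [neg_smul, ← sub_eq_add_neg, hDn, hBn] at h1
    norm_num at h1
end

section
/- Let X and Y be real Banach spaces and let x₁, x₂ ∈ X, y₁, y₂ ∈ Y. For μ ∈ ℝ, let S(μ) = sup{ |φ(x₁)ψ(y₁) + μ·φ(x₂)ψ(y₂)| : φ ∈ X*, ψ ∈ Y*, ‖φ‖ ≤ 1, ‖ψ‖ ≤ 1 } (this is the injective tensor norm of (x₁ ⊗ y₁) + μ(x₂ ⊗ y₂)). Then S(μ) ≥ ‖x₁‖·‖y₁‖ for all μ ∈ ℝ if and only if x₁ ⊥_BJ x₂ in X or y₁ ⊥_BJ y₂ in Y. In other words, x₁ ⊗ y₁ ⊥_BJ x₂ ⊗ y₂ in the injective tensor product X ⊗^λ Y if and only if x₁ ⊥_BJ x₂ or y₁ ⊥_BJ y₂. -/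
theorem aux_up {A P C Q a p c q : ℝ} (hP : 0 ≤ P) (hPA : P ≤ A) (hQC : Q ≤ C)
    (ha : |a| ≤ A) (hp : |p| ≤ P) (hc : |c| ≤ C) (hq : |q| ≤ Q) :
    a * c - (a - p) * (c - q) / 4 ≤ A * C - (A - P) * (C - Q) / 4 := by
  have h1 : a * (3 * c + q) ≤ A * |3 * c + q| := by
    refine (le_abs_self _).trans ?_
    rw [abs_mul]
    exact mul_le_mul_of_nonneg_right ha (abs_nonneg _)
  have h2 : p * (c - q) ≤ P * |c - q| := by
    refine (le_abs_self _).trans ?_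
    rw [abs_mul]
    exact mul_le_mul_of_nonneg_right hp (abs_nonneg _)
  obtain ⟨hc1, hc2⟩ := abs_le.1 hc
  obtain ⟨hq1, hq2⟩ := abs_le.1 hq
  have key : A * |3 * c + q| + P * |c - q| ≤ 3 * (A * C) + A * Q + P * C - P * Q := by
    have e1 := mul_nonneg hP (sub_nonneg.2 hQC)
    have k1 : 0 ≤ (P + 3 * A) * (C - c) := mul_nonneg (by linarith) (by linarith)
    have k2 : 0 ≤ (A - P) * (Q - q) := mul_nonneg (by linarith) (by linarith)
    have k3 : 0 ≤ (3 * A - P) * (C - c) := mul_nonneg (by linarith) (by linarith)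
    have k4 : 0 ≤ (A + P) * (Q - q) := mul_nonneg (by linarith) (by linarith)
    have k5 : 0 ≤ (P + 3 * A) * (C + c) := mul_nonneg (by linarith) (by linarith)
    have k6 : 0 ≤ (A - P) * (Q + q) := mul_nonneg (by linarith) (by linarith)
    have k7 : 0 ≤ (3 * A - P) * (C + c) := mul_nonneg (by linarith) (by linarith)
    have k8 : 0 ≤ (A + P) * (Q + q) := mul_nonneg (by linarith) (by linarith)
    rcases abs_cases (3 * c + q) with ⟨h, _⟩ | ⟨h, _⟩ <;>
      rcases abs_cases (c - q) with ⟨h', _⟩ | ⟨h', _⟩ <;> rw [h, h'] <;> nlinarith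
  linarith

theorem aux_abs {A P C Q a p c q : ℝ} (hP : 0 ≤ P) (hPA : P ≤ A) (hQC : Q ≤ C)
    (ha : |a| ≤ A) (hp : |p| ≤ P) (hc : |c| ≤ C) (hq : |q| ≤ Q) :
    |a * c - (a - p) * (c - q) / 4| ≤ A * C - (A - P) * (C - Q) / 4 := by
  have h1 := aux_up hP hPA hQC ha hp hc hq
  have h2 := aux_up (a := -a) (p := -p) hP hPA hQC (by rwa [abs_neg]) (by rwa [abs_neg]) hc hq
  rw [abs_le]
  constructor <;> linarith

theorem aux_fun {X : Type*} [NormedAddCommGroup X] [NormedSpace ℝ X] (x : X) :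
    ∃ φ : X →L[ℝ] ℝ, ‖φ‖ ≤ 1 ∧ φ x = ‖x‖ := by
  obtain ⟨g, h1, h2⟩ := exists_dual_vector'' ℝ x
  exact ⟨g, h1, by simpa using h2⟩

theorem aux_ap {X : Type*} [NormedAddCommGroup X] [NormedSpace ℝ X] (φ : X →L[ℝ] ℝ)
    (h : ‖φ‖ ≤ 1) (x : X) : |φ x| ≤ ‖x‖ := by
  have := φ.le_of_opNorm_le h x
  simpa using this

theorem aux_bj {X : Type*} [NormedAddCommGroup X] [NormedSpace ℝ X] (x₁ x₂ : X)
    (h : ∀ α : ℝ, ‖x₁ + α • x₂‖ ≥ ‖x₁‖) (r s : ℝ) (hr : 0 ≤ r) :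
    ‖x₁‖ * r ≤ ‖r • x₁ + s • x₂‖ := by
  rcases hr.eq_or_lt with rfl | hr'
  · simp
  · have e : r • x₁ + s • x₂ = r • (x₁ + (s / r) • x₂) := by
      rw [smul_add, smul_smul, mul_div_cancel₀ _ hr'.ne']
    rw [e, norm_smul, Real.norm_of_nonneg hr, mul_comm]
    exact mul_le_mul_of_nonneg_left (h _) hr

/-- For real Banach spaces `X, Y` and `x₁, x₂ ∈ X`, `y₁, y₂ ∈ Y`, the
injective tensor norm of `(x₁ ⊗ y₁) + μ (x₂ ⊗ y₂)`, i.e.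
`S(μ) = sup {|φ(x₁)ψ(y₁) + μ φ(x₂)ψ(y₂)| : ‖φ‖ ≤ 1, ‖ψ‖ ≤ 1}`, satisfies
`S(μ) ≥ ‖x₁‖·‖y₁‖` for all `μ ∈ ℝ` if and only if `x₁ ⊥_BJ x₂` or `y₁ ⊥_BJ y₂`. -/
theorem stmt6
    {X Y : Type*} [NormedAddCommGroup X] [NormedSpace ℝ X] [CompleteSpace X]
    [NormedAddCommGroup Y] [NormedSpace ℝ Y] [CompleteSpace Y]
    (x₁ x₂ : X) (y₁ y₂ : Y) :
    (∀ μ : ℝ,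
        sSup { t : ℝ | ∃ (φ : X →L[ℝ] ℝ) (ψ : Y →L[ℝ] ℝ), ‖φ‖ ≤ 1 ∧ ‖ψ‖ ≤ 1 ∧
            t = |φ x₁ * ψ y₁ + μ * (φ x₂ * ψ y₂)| } ≥ ‖x₁‖ * ‖y₁‖) ↔
      (∀ α : ℝ, ‖x₁ + α • x₂‖ ≥ ‖x₁‖) ∨ (∀ α : ℝ, ‖y₁ + α • y₂‖ ≥ ‖y₁‖) := by
  constructor
  · intro H
    by_contra hcon
    push Not at hcon
    obtain ⟨⟨α, hα⟩, ⟨β, hβ⟩⟩ := hcon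
    have h0 := H (-(α * β) / 4)
    have hub : sSup { t : ℝ | ∃ (φ : X →L[ℝ] ℝ) (ψ : Y →L[ℝ] ℝ), ‖φ‖ ≤ 1 ∧ ‖ψ‖ ≤ 1 ∧
            t = |φ x₁ * ψ y₁ + (-(α * β) / 4) * (φ x₂ * ψ y₂)| } ≤
        ‖x₁‖ * ‖y₁‖ - (‖x₁‖ - ‖x₁ + α • x₂‖) * (‖y₁‖ - ‖y₁ + β • y₂‖) / 4 := by
      apply csSup_le
      · exact ⟨_, 0, 0, by simp, by simp, rfl⟩
      · rintro t ⟨φ, ψ, hφ, hψ, rfl⟩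
        have := aux_abs (norm_nonneg (x₁ + α • x₂)) hα.le hβ.le (aux_ap φ hφ x₁)
          (aux_ap φ hφ (x₁ + α • x₂)) (aux_ap ψ hψ y₁) (aux_ap ψ hψ (y₁ + β • y₂))
        refine le_trans (le_of_eq ?_) this
        congr 1
        simp only [map_add, map_smul, smul_eq_mul]
        ring
    have := mul_pos (sub_pos.2 hα) (sub_pos.2 hβ)
    linarith
  · intro H μ
    have bdd : BddAbove { t : ℝ | ∃ (φ : X →L[ℝ] ℝ) (ψ : Y →L[ℝ] ℝ), ‖φ‖ ≤ 1 ∧ ‖ψ‖ ≤ 1 ∧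
            t = |φ x₁ * ψ y₁ + μ * (φ x₂ * ψ y₂)| } := by
      refine ⟨‖x₁‖ * ‖y₁‖ + |μ| * (‖x₂‖ * ‖y₂‖), ?_⟩
      rintro t ⟨φ, ψ, hφ, hψ, rfl⟩
      refine (abs_add_le _ _).trans ?_
      rw [abs_mul, abs_mul, abs_mul]
      have := aux_ap φ hφ x₁
      have := aux_ap φ hφ x₂
      have := aux_ap ψ hψ y₁
      have := aux_ap ψ hψ y₂
      gcongr
    rcases H with h | h
    · obtain ⟨ψ, hψ, hy⟩ := aux_fun y₁
      obtain ⟨φ, hφ, hx⟩ := aux_fun (‖y₁‖ • x₁ + (μ * ψ y₂) • x₂)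
      refine (aux_bj x₁ x₂ h ‖y₁‖ (μ * ψ y₂) (norm_nonneg _)).trans ?_
      refine le_csSup bdd ⟨φ, ψ, hφ, hψ, ?_⟩
      rw [← abs_of_nonneg (norm_nonneg (‖y₁‖ • x₁ + (μ * ψ y₂) • x₂)), ← hx, hy]
      congr 1
      simp only [map_add, map_smul, smul_eq_mul]
      ring
    · obtain ⟨φ, hφ, hx⟩ := aux_fun x₁
      obtain ⟨ψ, hψ, hy⟩ := aux_fun (‖x₁‖ • y₁ + (μ * φ x₂) • y₂)
      have := aux_bj y₁ y₂ h ‖x₁‖ (μ * φ x₂) (norm_nonneg _)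
      rw [mul_comm] at this
      refine this.trans ?_
      refine le_csSup bdd ⟨φ, ψ, hφ, hψ, ?_⟩
      rw [← abs_of_nonneg (norm_nonneg (‖x₁‖ • y₁ + (μ * φ x₂) • y₂)), ← hy, hx]
      congr 1
      simp only [map_add, map_smul, smul_eq_mul]
      ring
end

section
/- Let K₁ and K₂ be compact Hausdorff topological spaces and let f₁, f₂ ∈ C(K₁, ℝ) and g₁, g₂ ∈ C(K₂, ℝ) be continuous real-valued functions (with supremum norm). Then the function F₁ : K₁ × K₂ → ℝ, F₁(s,t) = f₁(s)·g₁(t), is Birkhoff-James orthogonal in C(K₁ × K₂, ℝ) to F₂(s,t) = f₂(s)·g₂(t) if and only if f₁ ⊥_BJ f₂ in C(K₁, ℝ) or g₁ ⊥_BJ g₂ in C(K₂, ℝ). -/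
lemma exists_abs_eq_norm {K : Type*} [TopologicalSpace K] [CompactSpace K] [Nonempty K]
    (f : C(K, ℝ)) : ∃ s, |f s| = ‖f‖ := by
  obtain ⟨s, -, hs⟩ := isCompact_univ.exists_isMaxOn (s := (Set.univ : Set K)) Set.univ_nonempty
    (f := fun s => |f s|) (by fun_prop)
  refine ⟨s, le_antisymm (f.norm_coe_le_norm s) ?_⟩
  rw [ContinuousMap.norm_le _ (abs_nonneg _)]
  intro x
  exact hs (Set.mem_univ x)

lemma half_bj {K : Type*} [TopologicalSpace K] [CompactSpace K] [Nonempty K]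
    (f h : C(K, ℝ)) (H : ∀ α : ℝ, ‖f + α • h‖ ≥ ‖f‖) :
    ∃ s, |f s| = ‖f‖ ∧ 0 ≤ f s * h s := by
  obtain ⟨s, -, hs⟩ := isCompact_univ.exists_isMaxOn (s := (Set.univ : Set K)) Set.univ_nonempty
    (f := fun s => min (|f s| - ‖f‖) (f s * h s)) (by fun_prop)
  have key : 0 ≤ min (|f s| - ‖f‖) (f s * h s) := by
    refine le_of_forall_pos_le_add fun ε hε => ?_
    have hC : 0 ≤ ‖h‖ := norm_nonneg h
    set C := ‖h‖ with hCdef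
    set a : ℝ := ε / (1 + C + C ^ 2) with ha
    have hD : 0 < 1 + C + C ^ 2 := by positivity
    have ha0 : 0 < a := by positivity
    have haD : a * (1 + C + C ^ 2) = ε := by rw [ha]; field_simp
    obtain ⟨x, hx⟩ := exists_abs_eq_norm (f + a • h)
    have h1 : ‖f‖ ≤ |f x + a * h x| := by
      have := H a
      rw [← hx] at this
      simpa using this
    have hfx : |f x| ≤ ‖f‖ := f.norm_coe_le_norm x
    have hhx : |h x| ≤ C := h.norm_coe_le_norm x
    have hm : min (|f x| - ‖f‖) (f x * h x) ≤ min (|f s| - ‖f‖) (f s * h s) :=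
      hs (Set.mem_univ x)
    have h2 : |f x + a * h x| ≤ |f x| + a * |h x| := by
      refine (abs_add_le _ _).trans ?_
      rw [abs_mul, abs_of_pos ha0]
    have h3 : a * |h x| ≤ a * C := by gcongr
    have hsq : h x ^ 2 ≤ C ^ 2 := by
      rw [← sq_abs]; gcongr
    have h4 : f x ^ 2 ≤ (f x + a * h x) ^ 2 := sq_le_sq.2 (hfx.trans h1)
    have h5 : 0 ≤ 2 * (f x * h x) + a * h x ^ 2 := by
      have : 0 ≤ a * (2 * (f x * h x) + a * h x ^ 2) := by nlinarith
      exact nonneg_of_mul_nonneg_right this ha0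
    have h6 : a * h x ^ 2 ≤ a * C ^ 2 := by gcongr
    have h7 : 0 ≤ a * C := by positivity
    have h8 : 0 ≤ a * C ^ 2 := by positivity
    have : -ε ≤ min (|f x| - ‖f‖) (f x * h x) := by
      apply le_min
      · nlinarith
      · nlinarith
    linarith
  rw [le_min_iff] at key
  exact ⟨s, le_antisymm (f.norm_coe_le_norm s) (by linarith [key.1]), key.2⟩

lemma bj_iff {K : Type*} [TopologicalSpace K] [CompactSpace K] [Nonempty K]
    (f h : C(K, ℝ)) : (∀ α : ℝ, ‖f + α • h‖ ≥ ‖f‖) ↔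
    (∃ s, |f s| = ‖f‖ ∧ 0 ≤ f s * h s) ∧ (∃ s, |f s| = ‖f‖ ∧ f s * h s ≤ 0) := by
  constructor
  · intro H
    refine ⟨half_bj f h H, ?_⟩
    obtain ⟨s, h1, h2⟩ := half_bj f (-h) (fun α => by simpa using H (-α))
    refine ⟨s, h1, ?_⟩
    simpa using h2
  · rintro ⟨⟨s, h1, h2⟩, ⟨t, h3, h4⟩⟩ α
    have aux : ∀ x, |f x| = ‖f‖ → 0 ≤ α * (f x * h x) → ‖f + α • h‖ ≥ ‖f‖ := by
      intro x hx hh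
      have := (f + α • h).norm_coe_le_norm x
      refine le_trans ?_ this
      rw [← hx]
      simp only [ContinuousMap.add_apply, ContinuousMap.smul_apply, smul_eq_mul, Real.norm_eq_abs]
      apply sq_le_sq.1
      nlinarith [sq_nonneg (α * h x)]
    rcases le_total 0 α with ha | ha
    · exact aux s h1 (mul_nonneg ha h2)
    · exact aux t h3 (mul_nonneg_of_nonpos_of_nonpos ha h4)

/-- For compact Hausdorff spaces `K₁, K₂` and real-valued continuous
functions `f₁, f₂` on `K₁` and `g₁, g₂` on `K₂`, the function `(s,t) ↦ f₁ s * g₁ t` is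
Birkhoff-James orthogonal to `(s,t) ↦ f₂ s * g₂ t` in `C(K₁ × K₂, ℝ)` if and only if
`f₁ ⊥_BJ f₂` in `C(K₁, ℝ)` or `g₁ ⊥_BJ g₂` in `C(K₂, ℝ)`. -/
theorem stmt7
    {K₁ K₂ : Type*} [TopologicalSpace K₁] [CompactSpace K₁] [T2Space K₁]
    [TopologicalSpace K₂] [CompactSpace K₂] [T2Space K₂]
    (f₁ f₂ : C(K₁, ℝ)) (g₁ g₂ : C(K₂, ℝ)) :
    (∀ α : ℝ,
        ‖(f₁.comp ContinuousMap.fst * g₁.comp ContinuousMap.snd) +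
            α • (f₂.comp ContinuousMap.fst * g₂.comp ContinuousMap.snd)‖ ≥
          ‖f₁.comp ContinuousMap.fst * g₁.comp ContinuousMap.snd‖) ↔
      (∀ α : ℝ, ‖f₁ + α • f₂‖ ≥ ‖f₁‖) ∨ (∀ α : ℝ, ‖g₁ + α • g₂‖ ≥ ‖g₁‖) := by
  rcases isEmpty_or_nonempty K₁ with hK | hK
  · have h1 : ∀ u : C(K₁, ℝ), ‖u‖ = 0 := fun u => by
      rw [norm_eq_zero]; ext x; exact hK.elim x
    have h2 : ∀ u : C(K₁ × K₂, ℝ), ‖u‖ = 0 := fun u => by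
      rw [norm_eq_zero]; ext x; exact hK.elim x.1
    simp [h1, h2]
  rcases isEmpty_or_nonempty K₂ with hL | hL
  · have h1 : ∀ u : C(K₂, ℝ), ‖u‖ = 0 := fun u => by
      rw [norm_eq_zero]; ext x; exact hL.elim x
    have h2 : ∀ u : C(K₁ × K₂, ℝ), ‖u‖ = 0 := fun u => by
      rw [norm_eq_zero]; ext x; exact hL.elim x.2
    simp [h1, h2]
  by_cases hf : f₁ = 0
  · subst hf; simp
  by_cases hg : g₁ = 0
  · subst hg; simp
  have hf0 : 0 < ‖f₁‖ := norm_pos_iff.2 hf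
  have hg0 : 0 < ‖g₁‖ := norm_pos_iff.2 hg
  have hfle : ∀ s, |f₁ s| ≤ ‖f₁‖ := f₁.norm_coe_le_norm
  have hgle : ∀ s, |g₁ s| ≤ ‖g₁‖ := g₁.norm_coe_le_norm
  obtain ⟨s₀, hs₀⟩ := exists_abs_eq_norm f₁
  obtain ⟨t₀, ht₀⟩ := exists_abs_eq_norm g₁
  have hN : ‖f₁.comp (ContinuousMap.fst : C(K₁ × K₂, K₁)) * g₁.comp ContinuousMap.snd‖
      = ‖f₁‖ * ‖g₁‖ := by
    apply le_antisymm
    · rw [ContinuousMap.norm_le _ (by positivity)]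
      intro x
      simp only [ContinuousMap.mul_apply, ContinuousMap.comp_apply, norm_mul]
      exact mul_le_mul (hfle _) (hgle _) (abs_nonneg _) hf0.le
    · have := (f₁.comp (ContinuousMap.fst : C(K₁ × K₂, K₁)) *
        g₁.comp ContinuousMap.snd).norm_coe_le_norm (s₀, t₀)
      rw [← hs₀, ← ht₀, ← abs_mul]
      exact this
  have hM : ∀ s t, |f₁ s * g₁ t| = ‖f₁‖ * ‖g₁‖ ↔ |f₁ s| = ‖f₁‖ ∧ |g₁ t| = ‖g₁‖ := by
    intro s t
    rw [abs_mul]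
    constructor
    · intro h
      have := hfle s
      have := hgle t
      constructor
      · by_contra hne
        have : |f₁ s| < ‖f₁‖ := lt_of_le_of_ne (hfle s) hne
        nlinarith [abs_nonneg (f₁ s)]
      · by_contra hne
        have : |g₁ t| < ‖g₁‖ := lt_of_le_of_ne (hgle t) hne
        nlinarith [abs_nonneg (g₁ t)]
    · rintro ⟨h1, h2⟩; rw [h1, h2]
  rw [bj_iff, bj_iff, bj_iff, hN]
  simp only [Prod.exists, ContinuousMap.mul_apply, ContinuousMap.comp_apply,
    ContinuousMap.fst_apply, ContinuousMap.snd_apply, hM]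
  have hr : ∀ s t, f₁ s * g₁ t * (f₂ s * g₂ t) = (f₁ s * f₂ s) * (g₁ t * g₂ t) :=
    fun s t => by ring
  simp only [hr]
  constructor
  · rintro ⟨⟨s, t, ⟨hs, ht⟩, h1⟩, ⟨s', t', ⟨hs', ht'⟩, h2⟩⟩
    by_contra hcon
    simp only [not_or, not_and_or, not_exists, not_le] at hcon
    obtain ⟨hA, hB⟩ := hcon
    rcases hA with hA | hA <;> rcases hB with hB | hB
    · linarith [mul_pos_of_neg_of_neg ((hA s').resolve_left (not_not.2 hs')) ((hB t').resolve_left (not_not.2 ht'))]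
    · linarith [mul_neg_of_neg_of_pos ((hA s).resolve_left (not_not.2 hs)) ((hB t).resolve_left (not_not.2 ht))]
    · linarith [mul_neg_of_pos_of_neg ((hA s).resolve_left (not_not.2 hs)) ((hB t).resolve_left (not_not.2 ht))]
    · linarith [mul_pos ((hA s').resolve_left (not_not.2 hs')) ((hB t').resolve_left (not_not.2 ht'))]
  · rintro (⟨⟨s, hs, h1⟩, ⟨s', hs', h2⟩⟩ | ⟨⟨t, ht, h1⟩, ⟨t', ht', h2⟩⟩)
    · rcases le_total 0 (g₁ t₀ * g₂ t₀) with h | h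
      · exact ⟨⟨s, t₀, ⟨hs, ht₀⟩, mul_nonneg h1 h⟩,
          ⟨s', t₀, ⟨hs', ht₀⟩, mul_nonpos_of_nonpos_of_nonneg h2 h⟩⟩
      · exact ⟨⟨s', t₀, ⟨hs', ht₀⟩, mul_nonneg_of_nonpos_of_nonpos h2 h⟩,
          ⟨s, t₀, ⟨hs, ht₀⟩, mul_nonpos_of_nonneg_of_nonpos h1 h⟩⟩
    · rcases le_total 0 (f₁ s₀ * f₂ s₀) with h | h
      · exact ⟨⟨s₀, t, ⟨hs₀, ht⟩, mul_nonneg h h1⟩,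
          ⟨s₀, t', ⟨hs₀, ht'⟩, mul_nonpos_of_nonneg_of_nonpos h h2⟩⟩
      · exact ⟨⟨s₀, t', ⟨hs₀, ht'⟩, mul_nonneg_of_nonpos_of_nonpos h h2⟩,
          ⟨s₀, t, ⟨hs₀, ht⟩, mul_nonpos_of_nonpos_of_nonneg h h1⟩⟩
end

section
/- Let (S, μ) and (T, ν) be σ-finite measure spaces and let 1 < p < ∞. Let f₁, g₁ ∈ L^p(S, μ; ℝ) and f₂, g₂ ∈ L^p(T, ν; ℝ), and let F, G ∈ L^p(S × T, μ × ν; ℝ) be the elements satisfying F(s,t) = f₁(s)·f₂(t) and G(s,t) = g₁(s)·g₂(t) for (μ × ν)-almost every (s,t). Then F ⊥_BJ G in L^p(S × T, μ × ν) if and only if f₁ ⊥_BJ g₁ in L^p(S, μ) or f₂ ⊥_BJ g₂ in L^p(T, ν). -/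
open MeasureTheory
open scoped ENNReal

lemma aux_norm_rpow {S : Type*} [MeasurableSpace S] (μ : Measure S)
    (p : ℝ≥0∞) (hp1 : 1 < p) (hp2 : p ≠ ⊤) (h : Lp ℝ p μ) :
    ‖h‖ ^ p.toReal = ∫ a, |h a| ^ p.toReal ∂μ := by
  have hp0 : p ≠ 0 := (zero_lt_one.trans hp1).ne'
  have hq : 0 < p.toReal := ENNReal.toReal_pos hp0 hp2
  have h0 : 0 ≤ ∫ a, |h a| ^ p.toReal ∂μ := integral_nonneg fun a => by positivity
  rw [Lp.norm_def, (Lp.memLp h).eLpNorm_eq_integral_rpow_norm hp0 hp2]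
  simp only [Real.norm_eq_abs]
  rw [ENNReal.toReal_ofReal (by positivity), ← Real.rpow_mul h0, inv_mul_cancel₀ hq.ne',
    Real.rpow_one]

lemma aux_bound (q : ℝ) (hq : 1 < q) (x y t : ℝ) (ht : |t| ≤ 1) :
    ‖q * |x + t * y| ^ (q - 2) * (x + t * y) * y‖ ≤ q * (|x| + |y|) ^ q := by
  have h1 : |x + t * y| ≤ |x| + |y| := by
    refine (abs_add_le _ _).trans ?_
    rw [abs_mul]
    nlinarith [abs_nonneg y]
  have h2 : |x + t * y| ^ (q - 2) * |x + t * y| = |x + t * y| ^ (q - 1) := by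
    rcases eq_or_ne (x + t * y) 0 with h | h
    · rw [h]; simp [Real.zero_rpow (by linarith : q - 1 ≠ 0)]
    · rw [← Real.rpow_add_one (by simpa using h)]; ring_nf
  have h3 : ‖q * |x + t * y| ^ (q - 2) * (x + t * y) * y‖
      = q * (|x + t * y| ^ (q - 1) * |y|) := by
    rw [← h2]
    simp only [norm_mul, Real.norm_eq_abs, abs_of_pos (by linarith : 0 < q)]
    rw [abs_of_nonneg (by positivity : 0 ≤ |x + t * y| ^ (q - 2))]
    ring
  rw [h3]
  gcongr
  rcases eq_or_ne (|x| + |y|) 0 with h | h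
  · have : |y| = 0 := by linarith [abs_nonneg x, abs_nonneg y]
    rw [this, mul_zero]; positivity
  · have : (|x| + |y|) ^ q = (|x| + |y|) ^ (q - 1) * (|x| + |y|) := by
      rw [← Real.rpow_add_one h]; ring_nf
    rw [this]
    have : |x + t * y| ^ (q - 1) ≤ (|x| + |y|) ^ (q - 1) :=
      Real.rpow_le_rpow (abs_nonneg _) h1 (by linarith)
    gcongr
    linarith [abs_nonneg x]

lemma aux_deriv {S : Type*} [MeasurableSpace S] (μ : Measure S)
    (p : ℝ≥0∞) (hp1 : 1 < p) (hp2 : p ≠ ⊤) (f g : Lp ℝ p μ) :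
    HasDerivAt (fun α : ℝ => ‖f + α • g‖ ^ p.toReal)
      (p.toReal * ∫ a, |f a| ^ (p.toReal - 2) * f a * g a ∂μ) 0 := by
  have hp0 : p ≠ 0 := (zero_lt_one.trans hp1).ne'
  have hq : 1 < p.toReal := by
    have := (ENNReal.toReal_lt_toReal ENNReal.one_ne_top hp2).2 hp1
    simpa using this
  set q := p.toReal with hqdef
  have e : (fun α : ℝ => ‖f + α • g‖ ^ q) = fun α : ℝ => ∫ a, |f a + α * g a| ^ q ∂μ := by
    funext α
    rw [aux_norm_rpow μ p hp1 hp2]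
    refine integral_congr_ae ?_
    filter_upwards [Lp.coeFn_add f (α • g), Lp.coeFn_smul α g] with a h1 h2
    rw [h1, Pi.add_apply, h2, Pi.smul_apply, smul_eq_mul]
  rw [e]
  have hf := (Lp.memLp f)
  have hg := (Lp.memLp g)
  have hfm := hf.1.aemeasurable
  have hgm := hg.1.aemeasurable
  have key := hasDerivAt_integral_of_dominated_loc_of_deriv_le (μ := μ) (x₀ := (0:ℝ))
    (F := fun α a => |f a + α * g a| ^ q)
    (F' := fun α a => q * |f a + α * g a| ^ (q - 2) * (f a + α * g a) * g a)
    (bound := fun a => q * (|f a| + |g a|) ^ q)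
    (s := Metric.ball 0 1) (Metric.ball_mem_nhds _ one_pos)
    (Filter.Eventually.of_forall fun α => by
      refine AEMeasurable.aestronglyMeasurable ?_
      fun_prop)
    (by simpa using hf.integrable_norm_rpow hp0 hp2)
    (by
      refine AEMeasurable.aestronglyMeasurable ?_
      fun_prop)
    (Filter.Eventually.of_forall fun a t ht => by
      refine aux_bound q hq _ _ _ ?_
      simpa using (mem_ball_zero_iff.1 ht).le)
    (by
      have := ((hf.norm.add hg.norm).integrable_norm_rpow hp0 hp2).const_mul q
      refine this.congr (Filter.Eventually.of_forall fun a => ?_)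
      simp only [Pi.add_apply, Real.norm_eq_abs]
      rw [abs_of_nonneg (by positivity : 0 ≤ |f a| + |g a|)])
    (Filter.Eventually.of_forall fun a t _ => by
      have h1 : HasDerivAt (fun t : ℝ => f a + t * g a) (g a) t := by
        simpa using ((hasDerivAt_id t).mul_const (g a)).const_add (f a)
      exact (hasDerivAt_abs_rpow (f a + t * g a) hq).comp t h1)
  refine key.2.congr_deriv ?_
  rw [← integral_const_mul]
  congr 1
  funext a
  simp only [zero_mul, add_zero]
  ring

lemma aux_key {S : Type*} [MeasurableSpace S] (μ : Measure S)
    (p : ℝ≥0∞) (hp1 : 1 < p) (hp2 : p ≠ ⊤) (f g : Lp ℝ p μ) :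
    (∀ α : ℝ, ‖f + α • g‖ ≥ ‖f‖) ↔ ∫ a, |f a| ^ (p.toReal - 2) * f a * g a ∂μ = 0 := by
  haveI : Fact (1 ≤ p) := ⟨hp1.le⟩
  have hq : 1 < p.toReal := by
    have := (ENNReal.toReal_lt_toReal ENNReal.one_ne_top hp2).2 hp1
    simpa using this
  have hd := aux_deriv μ p hp1 hp2 f g
  constructor
  · intro h
    have hm : IsLocalMin (fun α : ℝ => ‖f + α • g‖ ^ p.toReal) 0 :=
      Filter.Eventually.of_forall fun α => by
        have := h α
        simp only [zero_smul, add_zero]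
        exact Real.rpow_le_rpow (norm_nonneg _) this (by linarith)
    have := hm.hasDerivAt_eq_zero hd
    rcases mul_eq_zero.1 this with h | h
    · linarith
    · exact h
  · intro h α
    rw [h, mul_zero] at hd
    have hc : ConvexOn ℝ Set.univ (fun α : ℝ => ‖f + α • g‖ ^ p.toReal) := by
      refine ⟨convex_univ, fun x _ y _ a b ha hb hab => ?_⟩
      have h1 : ‖f + (a • x + b • y) • g‖ ≤ a * ‖f + x • g‖ + b * ‖f + y • g‖ := by
        have : f + (a • x + b • y) • g = a • (f + x • g) + b • (f + y • g) := by
          have : f = (a + b) • f := by rw [hab, one_smul]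
          nth_rewrite 1 [this]
          simp only [smul_eq_mul]
          module
        rw [this]
        refine (norm_add_le _ _).trans ?_
        rw [norm_smul, norm_smul, Real.norm_of_nonneg ha, Real.norm_of_nonneg hb]
      refine (Real.rpow_le_rpow (norm_nonneg _) h1 (by linarith)).trans ?_
      exact (convexOn_rpow hq.le).2 (norm_nonneg _) (norm_nonneg _) ha hb hab
    have h2 : ‖f‖ ^ p.toReal ≤ ‖f + α • g‖ ^ p.toReal := by
      rcases lt_trichotomy α 0 with hα | hα | hα
      · have := hc.slope_le_of_hasDerivAt (Set.mem_univ _) (Set.mem_univ _) hα hd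
        rw [slope_def_field, div_nonpos_iff] at this
        simp only [zero_smul, add_zero] at this
        rcases this with h | h <;> linarith
      · simp [hα]
      · have := hc.le_slope_of_hasDerivAt (Set.mem_univ _) (Set.mem_univ _) hα hd
        rw [slope_def_field, div_nonneg_iff] at this
        simp only [zero_smul, add_zero] at this
        rcases this with h | h <;> linarith
    exact (Real.rpow_le_rpow_iff (norm_nonneg _) (norm_nonneg _) (by linarith)).1 h2

/-- For σ-finite measure spaces `(S, μ)`, `(T, ν)` and `1 < p < ∞`, if
`F, G ∈ L^p(S × T, μ × ν; ℝ)` are given a.e. by `F(s,t) = f₁ s * f₂ t` and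
`G(s,t) = g₁ s * g₂ t`, then `F ⊥_BJ G` in `L^p(μ × ν)` if and only if `f₁ ⊥_BJ g₁` in
`L^p(μ)` or `f₂ ⊥_BJ g₂` in `L^p(ν)`. -/
theorem stmt8
    {S T : Type*} [MeasurableSpace S] [MeasurableSpace T]
    (μ : Measure S) (ν : Measure T) [SigmaFinite μ] [SigmaFinite ν]
    (p : ℝ≥0∞) (hp1 : 1 < p) (hp2 : p ≠ ⊤)
    (f₁ g₁ : Lp ℝ p μ) (f₂ g₂ : Lp ℝ p ν)
    (F G : Lp ℝ p (μ.prod ν))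
    (hF : ∀ᵐ z ∂(μ.prod ν), F z = f₁ z.1 * f₂ z.2)
    (hG : ∀ᵐ z ∂(μ.prod ν), G z = g₁ z.1 * g₂ z.2) :
    (∀ α : ℝ, ‖F + α • G‖ ≥ ‖F‖) ↔
      (∀ α : ℝ, ‖f₁ + α • g₁‖ ≥ ‖f₁‖) ∨ (∀ α : ℝ, ‖f₂ + α • g₂‖ ≥ ‖f₂‖) := by
  rw [aux_key _ p hp1 hp2, aux_key _ p hp1 hp2, aux_key _ p hp1 hp2, ← mul_eq_zero,
    ← integral_prod_mul]
  have : ∫ z, |F z| ^ (p.toReal - 2) * F z * G z ∂(μ.prod ν)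
      = ∫ z, (|f₁ z.1| ^ (p.toReal - 2) * f₁ z.1 * g₁ z.1) *
        (|f₂ z.2| ^ (p.toReal - 2) * f₂ z.2 * g₂ z.2) ∂(μ.prod ν) := by
    refine integral_congr_ae ?_
    filter_upwards [hF, hG] with z h1 h2
    rw [h1, h2, abs_mul, Real.mul_rpow (abs_nonneg _) (abs_nonneg _)]
    ring
  rw [this]
end

section
/- Let K₁ and K₂ be compact Hausdorff topological spaces. Suppose f₁ ∈ C(K₁, ℂ) attains its supremum norm at exactly one point of K₁ (i.e. there is a unique k ∈ K₁ with |f₁(k)| = ‖f₁‖_∞) and g₁ ∈ C(K₂, ℂ) attains its supremum norm at exactly one point of K₂. Then for any f₂ ∈ C(K₁, ℂ) and g₂ ∈ C(K₂, ℂ): if the function F₁(s,t) = f₁(s)·g₁(t) is Birkhoff-James orthogonal in C(K₁ × K₂, ℂ) to F₂(s,t) = f₂(s)·g₂(t), then f₁ ⊥_BJ f₂ in C(K₁, ℂ) or g₁ ⊥_BJ g₂ in C(K₂, ℂ). -/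
theorem bj_aux {K : Type*} [TopologicalSpace K] [CompactSpace K]
    (u v : C(K, ℂ)) (k : K) (hu : 0 < ‖u‖) (hk : ‖u k‖ = ‖u‖)
    (huniq : ∀ x, ‖u x‖ = ‖u‖ → x = k)
    (hvk : v k = u k) : ∃ t : ℝ, ‖u + (-(t : ℂ)) • v‖ < ‖u‖ := by
  have hcont : Continuous (fun x => inner ℝ (u x) (v x)) := by fun_prop
  have hle : ∀ x, ‖u x‖ ≤ ‖u‖ := u.norm_coe_le_norm
  have hlev : ∀ x, ‖v x‖ ≤ ‖v‖ := v.norm_coe_le_norm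
  obtain ⟨m, hm, hmx⟩ : ∃ m < ‖u‖, ∀ x, inner ℝ (u x) (v x) ≤ ‖u‖ ^ 2 / 2 → ‖u x‖ ≤ m := by
    have hc : IsCompact {x | inner ℝ (u x) (v x) ≤ ‖u‖ ^ 2 / 2} :=
      (isClosed_le hcont continuous_const).isCompact
    rcases Set.eq_empty_or_nonempty {x | inner ℝ (u x) (v x) ≤ ‖u‖ ^ 2 / 2} with he | hne
    · refine ⟨0, hu, fun x hx => ?_⟩
      have : x ∈ {x | inner ℝ (u x) (v x) ≤ ‖u‖ ^ 2 / 2} := hx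
      rw [he] at this
      exact this.elim
    · obtain ⟨y, hy, hmax⟩ := hc.exists_isMaxOn hne (f := fun x => ‖u x‖)
        (by fun_prop)
      refine ⟨‖u y‖, lt_of_le_of_ne (hle y) (fun h => ?_), fun x hx => hmax hx⟩
      have hyk := huniq y h
      simp only [Set.mem_ofPred_eq] at hy
      rw [hyk, hvk, real_inner_self_eq_norm_sq, hk] at hy
      have := pow_pos hu 2
      linarith
  obtain ⟨a, ha, ha'⟩ := exists_pos_mul_lt (pow_pos hu 2) (‖v‖ ^ 2)
  obtain ⟨b, hb, hb'⟩ := exists_pos_mul_lt (sub_pos.2 hm) (‖v‖)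
  obtain ⟨t, ht, hta, htb⟩ : ∃ t : ℝ, 0 < t ∧ t ≤ a ∧ t ≤ b :=
    ⟨min a b, lt_min ha hb, min_le_left _ _, min_le_right _ _⟩
  have h1 : ‖v‖ ^ 2 * t < ‖u‖ ^ 2 :=
    lt_of_le_of_lt (mul_le_mul_of_nonneg_left hta (by positivity)) ha'
  have h2 : ‖v‖ * t < ‖u‖ - m :=
    lt_of_le_of_lt (mul_le_mul_of_nonneg_left htb (by positivity)) hb'
  refine ⟨t, (ContinuousMap.norm_lt_iff _ hu).2 fun x => ?_⟩
  have e : (u + (-(t : ℂ)) • v) x = u x - t • v x := by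
    simp [sub_eq_add_neg]
  have hn : ‖t • v x‖ = t * ‖v x‖ := by rw [norm_smul, Real.norm_of_nonneg ht.le]
  rw [e]
  by_cases hx : inner ℝ (u x) (v x) ≤ ‖u‖ ^ 2 / 2
  · have := norm_sub_le (u x) (t • v x)
    have h3 := hmx x hx
    have h4 := mul_le_mul_of_nonneg_left (hlev x) ht.le
    rw [hn] at this
    linarith
  · push Not at hx
    have h3 := norm_sub_sq_real (u x) (t • v x)
    rw [hn, real_inner_smul_right] at h3
    refine lt_of_pow_lt_pow_left₀ 2 hu.le ?_
    have h4 : ‖u x‖ ^ 2 ≤ ‖u‖ ^ 2 := pow_le_pow_left₀ (norm_nonneg _) (hle x) 2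
    have h5 : ‖v x‖ ^ 2 ≤ ‖v‖ ^ 2 := pow_le_pow_left₀ (norm_nonneg _) (hlev x) 2
    have h6 := mul_le_mul_of_nonneg_left h5 (sq_nonneg t)
    have h7 := mul_lt_mul_of_pos_left hx ht
    have h8 := mul_lt_mul_of_pos_left h1 ht
    rw [h3]
    nlinarith

theorem bj_zero {K : Type*} [TopologicalSpace K] [CompactSpace K]
    (u v : C(K, ℂ)) (k : K) (hu : 0 < ‖u‖) (hk : ‖u k‖ = ‖u‖)
    (huniq : ∀ x, ‖u x‖ = ‖u‖ → x = k)
    (h : ∀ α : ℂ, ‖u + α • v‖ ≥ ‖u‖) : v k = 0 := by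
  by_contra hv
  obtain ⟨t, ht⟩ := bj_aux u ((u k / v k) • v) k hu hk huniq (by simp [hv])
  rw [smul_smul] at ht
  exact absurd ht (not_lt.2 (h _))

theorem bj_of_zero {K : Type*} [TopologicalSpace K] [CompactSpace K]
    (u v : C(K, ℂ)) (k : K) (hk : ‖u k‖ = ‖u‖) (hv : v k = 0) (α : ℂ) :
    ‖u + α • v‖ ≥ ‖u‖ := by
  have := (u + α • v).norm_coe_le_norm k
  simpa [hv, hk] using this

/-- For compact Hausdorff spaces `K₁, K₂`, if `f₁ ∈ C(K₁, ℂ)` attains its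
supremum norm at exactly one point, and likewise `g₁ ∈ C(K₂, ℂ)`, then for any
`f₂ ∈ C(K₁, ℂ)` and `g₂ ∈ C(K₂, ℂ)`, Birkhoff-James orthogonality of `(s,t) ↦ f₁ s * g₁ t`
to `(s,t) ↦ f₂ s * g₂ t` in `C(K₁ × K₂, ℂ)` implies `f₁ ⊥_BJ f₂` or `g₁ ⊥_BJ g₂`. -/
theorem stmt9
    {K₁ K₂ : Type*} [TopologicalSpace K₁] [CompactSpace K₁] [T2Space K₁]
    [TopologicalSpace K₂] [CompactSpace K₂] [T2Space K₂]
    (f₁ f₂ : C(K₁, ℂ)) (g₁ g₂ : C(K₂, ℂ))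
    (hf₁ : ∃! k : K₁, ‖f₁ k‖ = ‖f₁‖)
    (hg₁ : ∃! k : K₂, ‖g₁ k‖ = ‖g₁‖)
    (hBJ : ∀ α : ℂ,
      ‖(f₁.comp ContinuousMap.fst * g₁.comp ContinuousMap.snd) +
          α • (f₂.comp ContinuousMap.fst * g₂.comp ContinuousMap.snd)‖ ≥
        ‖f₁.comp ContinuousMap.fst * g₁.comp ContinuousMap.snd‖) :
    (∀ α : ℂ, ‖f₁ + α • f₂‖ ≥ ‖f₁‖) ∨ (∀ α : ℂ, ‖g₁ + α • g₂‖ ≥ ‖g₁‖) := by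
  obtain ⟨s, hs, hsu⟩ := hf₁
  obtain ⟨t, ht, htu⟩ := hg₁
  simp only at hs ht hsu htu
  rcases (norm_nonneg f₁).eq_or_lt with h0 | hf
  · left; intro α; rw [← h0]; exact norm_nonneg _
  rcases (norm_nonneg g₁).eq_or_lt with h0 | hg
  · right; intro α; rw [← h0]; exact norm_nonneg _
  have hN : ‖f₁.comp ContinuousMap.fst * g₁.comp (ContinuousMap.snd : C(K₁ × K₂, K₂))‖
      = ‖f₁‖ * ‖g₁‖ := by
    apply le_antisymm
    · refine (ContinuousMap.norm_le _ (by positivity)).2 fun x => ?_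
      simp only [ContinuousMap.mul_apply, ContinuousMap.comp_apply, norm_mul]
      exact mul_le_mul (f₁.norm_coe_le_norm _) (g₁.norm_coe_le_norm _) (norm_nonneg _)
        (norm_nonneg _)
    · have := (f₁.comp ContinuousMap.fst *
        g₁.comp (ContinuousMap.snd : C(K₁ × K₂, K₂))).norm_coe_le_norm (s, t)
      simpa [hs, ht] using this
  have key := bj_zero _ _ (s, t) (by rw [hN]; positivity) (by rw [hN]; simp [hs, ht]) (by
    rintro ⟨x, y⟩ hxy
    rw [hN] at hxy
    simp only [ContinuousMap.mul_apply, ContinuousMap.comp_apply, norm_mul,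
      ContinuousMap.fst_apply, ContinuousMap.snd_apply] at hxy
    have hx := f₁.norm_coe_le_norm x
    have hy := g₁.norm_coe_le_norm y
    have hx0 := norm_nonneg (f₁ x)
    have hx' : ‖f₁ x‖ = ‖f₁‖ := by
      apply le_antisymm hx
      by_contra! hlt
      nlinarith
    have hy' : ‖g₁ y‖ = ‖g₁‖ := by
      rw [hx'] at hxy
      exact mul_left_cancel₀ hf.ne' hxy
    rw [hsu x hx', htu y hy']) hBJ
  simp only [ContinuousMap.mul_apply, ContinuousMap.comp_apply,
      ContinuousMap.fst_apply, ContinuousMap.snd_apply, mul_eq_zero] at key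
  rcases key with h | h
  · exact Or.inl (bj_of_zero f₁ f₂ s hs h)
  · exact Or.inr (bj_of_zero g₁ g₂ t ht h)
end

section
/- Let K₁ and K₂ be nonempty compact Hausdorff topological spaces and let f₁, f₂ ∈ C(K₁, ℂ) and g₁, g₂ ∈ C(K₂, ℂ). Then the function F₁ : K₁ × K₂ → ℂ, F₁(s,t) = f₁(s)·g₁(t), is strongly Birkhoff-James orthogonal in C(K₁ × K₂, ℂ) to F₂(s,t) = f₂(s)·g₂(t) — meaning ‖F₁ + F₂·h‖_∞ ≥ ‖F₁‖_∞ for every h ∈ C(K₁ × K₂, ℂ) — if and only if f₁ is strongly Birkhoff-James orthogonal to f₂ in C(K₁, ℂ) (i.e. ‖f₁ + f₂·a‖_∞ ≥ ‖f₁‖_∞ for every a ∈ C(K₁, ℂ)) or g₁ is strongly Birkhoff-James orthogonal to g₂ in C(K₂, ℂ). -/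
theorem exists_peak {K : Type*} [TopologicalSpace K] [CompactSpace K] [Nonempty K]
    (f : C(K, ℂ)) : ∃ x, ‖f x‖ = ‖f‖ := by
  obtain ⟨x, -, hx⟩ := isCompact_univ.exists_isMaxOn (Set.univ_nonempty (α := K))
    (f := fun x => ‖f x‖) (by fun_prop)
  refine ⟨x, le_antisymm (f.norm_coe_le_norm x) ?_⟩
  rw [ContinuousMap.norm_le _ (norm_nonneg _)]
  exact fun y => hx (Set.mem_univ y)

theorem sbj_iff {K : Type*} [TopologicalSpace K] [CompactSpace K] [Nonempty K]
    (f g : C(K, ℂ)) : (∀ a : C(K, ℂ), ‖f + g * a‖ ≥ ‖f‖) ↔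
      f = 0 ∨ ∃ x, ‖f x‖ = ‖f‖ ∧ g x = 0 := by
  constructor
  · intro H
    by_contra! hc
    obtain ⟨hf, hg⟩ := hc
    have hfpos : 0 < ‖f‖ := norm_pos_iff.2 hf
    set ε : ℝ := 1 / (1 + ‖g‖ ^ 2) with hε
    have hεpos : 0 < ε := by positivity
    have hle : ∀ x, ε * ‖g x‖ ^ 2 ≤ 1 := by
      intro x
      have h1 : ‖g x‖ ^ 2 ≤ ‖g‖ ^ 2 := by
        gcongr
        exact g.norm_coe_le_norm x
      rw [hε, one_div, inv_mul_le_iff₀ (by positivity)]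
      linarith
    have h := H (-((ε : ℂ) • (star g * f)))
    obtain ⟨x, hx⟩ := exists_peak (f + g * (-((ε : ℂ) • (star g * f))))
    rw [← hx] at h
    have e : (f + g * (-((ε : ℂ) • (star g * f)))) x
        = ((1 - ε * ‖g x‖ ^ 2 : ℝ) : ℂ) * f x := by
      have := Complex.mul_conj' (g x)
      simp only [ContinuousMap.add_apply, ContinuousMap.mul_apply, ContinuousMap.neg_apply,
        ContinuousMap.smul_apply, ContinuousMap.star_apply, smul_eq_mul, RCLike.star_def]
      push_cast
      rw [← this]
      ring
    rw [e, norm_mul, Complex.norm_real, Real.norm_of_nonneg (by linarith [hle x])] at h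
    have h2 := f.norm_coe_le_norm x
    have h3 : 0 ≤ ε * ‖g x‖ ^ 2 := by positivity
    have h4 : ‖f x‖ = ‖f‖ := by
      apply le_antisymm h2
      nlinarith [norm_nonneg (f x)]
    have h5 := norm_pos_iff.2 (hg x h4)
    have h6 : 0 < ε * ‖g x‖ ^ 2 := by positivity
    rw [h4] at h
    nlinarith
  · rintro (rfl | ⟨x, hx, hgx⟩) a
    · simp
    · have := (f + g * a).norm_coe_le_norm x
      simp only [ContinuousMap.add_apply, ContinuousMap.mul_apply, hgx, zero_mul, add_zero] at this
      rw [← hx]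
      exact this

theorem norm_tensor {K₁ K₂ : Type*} [TopologicalSpace K₁] [CompactSpace K₁] [Nonempty K₁]
    [TopologicalSpace K₂] [CompactSpace K₂] [Nonempty K₂] (f : C(K₁, ℂ)) (g : C(K₂, ℂ)) :
    ‖f.comp (ContinuousMap.fst : C(K₁ × K₂, K₁)) * g.comp ContinuousMap.snd‖ = ‖f‖ * ‖g‖ := by
  apply le_antisymm
  · rw [ContinuousMap.norm_le _ (by positivity)]
    rintro ⟨s, t⟩
    simp only [ContinuousMap.mul_apply, ContinuousMap.comp_apply, norm_mul]
    gcongr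
    · exact f.norm_coe_le_norm s
    · exact g.norm_coe_le_norm t
  · obtain ⟨s, hs⟩ := exists_peak f
    obtain ⟨t, ht⟩ := exists_peak g
    rw [← hs, ← ht, ← norm_mul]
    exact ContinuousMap.norm_coe_le_norm
      (f.comp (ContinuousMap.fst : C(K₁ × K₂, K₁)) * g.comp ContinuousMap.snd) (s, t)


/-- For nonempty compact Hausdorff spaces `K₁, K₂` and
`f₁, f₂ ∈ C(K₁, ℂ)`, `g₁, g₂ ∈ C(K₂, ℂ)`, the function `(s,t) ↦ f₁ s * g₁ t` is strongly
Birkhoff-James orthogonal to `(s,t) ↦ f₂ s * g₂ t` in the C*-algebra `C(K₁ × K₂, ℂ)` if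
and only if `f₁ ⊥ˢ_BJ f₂` in `C(K₁, ℂ)` or `g₁ ⊥ˢ_BJ g₂` in `C(K₂, ℂ)`. -/
theorem stmt10
    {K₁ K₂ : Type*} [TopologicalSpace K₁] [CompactSpace K₁] [T2Space K₁] [Nonempty K₁]
    [TopologicalSpace K₂] [CompactSpace K₂] [T2Space K₂] [Nonempty K₂]
    (f₁ f₂ : C(K₁, ℂ)) (g₁ g₂ : C(K₂, ℂ)) :
    (∀ h : C(K₁ × K₂, ℂ),
        ‖(f₁.comp ContinuousMap.fst * g₁.comp ContinuousMap.snd) +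
            (f₂.comp ContinuousMap.fst * g₂.comp ContinuousMap.snd) * h‖ ≥
          ‖f₁.comp ContinuousMap.fst * g₁.comp ContinuousMap.snd‖) ↔
      (∀ a : C(K₁, ℂ), ‖f₁ + f₂ * a‖ ≥ ‖f₁‖) ∨
        (∀ b : C(K₂, ℂ), ‖g₁ + g₂ * b‖ ≥ ‖g₁‖) := by
  rw [sbj_iff, sbj_iff, sbj_iff, ← norm_eq_zero, norm_tensor, mul_eq_zero, norm_eq_zero,
    norm_eq_zero]
  constructor
  · rintro ((h | h) | ⟨⟨s, t⟩, h, h0⟩)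
    · exact Or.inl (Or.inl h)
    · exact Or.inr (Or.inl h)
    · by_cases hf : f₁ = 0
      · exact Or.inl (Or.inl hf)
      by_cases hg : g₁ = 0
      · exact Or.inr (Or.inl hg)
      have hf' := norm_pos_iff.2 hf
      have hg' := norm_pos_iff.2 hg
      have h' : ‖f₁ s‖ * ‖g₁ t‖ = ‖f₁‖ * ‖g₁‖ := by rw [← h, ← norm_mul]; rfl
      have a := f₁.norm_coe_le_norm s
      have b := g₁.norm_coe_le_norm t
      rcases mul_eq_zero.1 (show f₂ s * g₂ t = 0 from h0) with h0 | h0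
      · refine Or.inl (Or.inr ⟨s, le_antisymm a ?_, h0⟩)
        nlinarith [norm_nonneg (f₁ s)]
      · refine Or.inr (Or.inr ⟨t, le_antisymm b ?_, h0⟩)
        nlinarith [norm_nonneg (g₁ t)]
  · rintro ((h | ⟨s, h, h0⟩) | (h | ⟨t, h, h0⟩))
    · exact Or.inl (Or.inl h)
    · obtain ⟨t, ht⟩ := exists_peak g₁
      refine Or.inr ⟨(s, t), ?_, ?_⟩
      · rw [← h, ← ht, ← norm_mul]; rfl
      · simp [h0]
    · exact Or.inl (Or.inr h)
    · obtain ⟨s, hs⟩ := exists_peak f₁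
      refine Or.inr ⟨(s, t), ?_, ?_⟩
      · rw [← h, ← hs, ← norm_mul]; rfl
      · simp [h0]
end

section
/- Let n, m be positive natural numbers. For vectors x₁, y₁, z₁, w₁ ∈ ℂⁿ and x₂, y₂, z₂, w₂ ∈ ℂᵐ, consider the rank-one matrices T₁ = x₁ y₁* ∈ Mₙ(ℂ) (i.e. (T₁)ᵢⱼ = x₁(i)·conj(y₁(j))), T₂ = x₂ y₂* ∈ Mₘ(ℂ), S₁ = z₁ w₁* ∈ Mₙ(ℂ), S₂ = z₂ w₂* ∈ Mₘ(ℂ), and equip square complex matrices with the spectral norm (operator norm induced by the Euclidean ℓ² norm). If the Kronecker product T₁ ⊗ T₂ is Birkhoff-James orthogonal to S₁ ⊗ S₂ in M_{nm}(ℂ) with the spectral norm, then T₁ ⊥_BJ S₁ in Mₙ(ℂ) or T₂ ⊥_BJ S₂ in Mₘ(ℂ). -/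
open Kronecker
open scoped Matrix.Norms.L2Operator ComplexConjugate

/-- Entries of a matrix, as a Euclidean vector (Frobenius). -/
noncomputable def frobVec {κ : Type*} (A : Matrix κ κ ℂ) : EuclideanSpace ℂ (κ × κ) :=
  WithLp.toLp 2 fun p => A p.1 p.2

lemma l2_le_frob {κ : Type*} [Fintype κ] [DecidableEq κ] (A : Matrix κ κ ℂ) :
    ‖A‖ ≤ ‖frobVec A‖ := by
  rw [Matrix.cstar_norm_def]
  refine ContinuousLinearMap.opNorm_le_bound _ (norm_nonneg _) fun v => ?_
  refine le_of_sq_le_sq ?_ (by positivity)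
  rw [mul_pow, EuclideanSpace.norm_sq_eq, EuclideanSpace.norm_sq_eq (frobVec A),
    Fintype.sum_prod_type, Finset.sum_mul]
  refine Finset.sum_le_sum fun i _ => ?_
  have h1 : ‖(Matrix.toEuclideanCLM (n := κ) (𝕜 := ℂ) A v).ofLp i‖ ≤ ∑ j, ‖A i j‖ * ‖v j‖ := by
    rw [Matrix.ofLp_toEuclideanCLM]
    simp only [Matrix.mulVec, dotProduct]
    refine (norm_sum_le _ _).trans (le_of_eq ?_)
    simp
  calc _ ≤ (∑ j, ‖A i j‖ * ‖v j‖) ^ 2 := by gcongr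
    _ ≤ (∑ j, ‖A i j‖ ^ 2) * ∑ j, ‖v j‖ ^ 2 := Finset.sum_mul_sq_le_sq_mul_sq _ _ _
    _ = _ := by rw [EuclideanSpace.norm_sq_eq]; rfl

lemma inner_frob_rank_one {κ : Type*} [Fintype κ] [DecidableEq κ] (x y : κ → ℂ)
    (T A : Matrix κ κ ℂ) (hT : T = Matrix.of fun i j => x i * conj (y j)) :
    inner ℂ (frobVec T) (frobVec A) = inner ℂ (WithLp.toLp 2 x : EuclideanSpace ℂ κ)
      (Matrix.toEuclideanCLM (n := κ) (𝕜 := ℂ) A (WithLp.toLp 2 y)) := by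
  subst hT
  rw [PiLp.inner_apply, PiLp.inner_apply, Fintype.sum_prod_type]
  refine Finset.sum_congr rfl fun i _ => ?_
  simp only [Matrix.ofLp_toEuclideanCLM, Matrix.mulVec, dotProduct, frobVec, Matrix.of_apply,
    RCLike.inner_apply, Finset.sum_mul, map_mul, Complex.conj_conj]
  refine Finset.sum_congr rfl fun j _ => ?_
  ring

lemma norm_frob_rank_one {κ : Type*} [Fintype κ] [DecidableEq κ] (x y : κ → ℂ)
    (T : Matrix κ κ ℂ) (hT : T = Matrix.of fun i j => x i * conj (y j)) :
    ‖frobVec T‖ = ‖(WithLp.toLp 2 x : EuclideanSpace ℂ κ)‖ *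
      ‖(WithLp.toLp 2 y : EuclideanSpace ℂ κ)‖ := by
  subst hT
  refine (sq_eq_sq₀ (by positivity) (by positivity)).1 ?_
  rw [mul_pow, EuclideanSpace.norm_sq_eq, EuclideanSpace.norm_sq_eq, EuclideanSpace.norm_sq_eq,
    Fintype.sum_prod_type, Finset.sum_mul_sum]
  simp [frobVec, mul_pow]

/-- If the Frobenius inner product is that of `T` with itself, the norm dominates. -/
lemma frob_le_of_inner {κ : Type*} [Fintype κ] [DecidableEq κ] (x y : κ → ℂ)
    (T A : Matrix κ κ ℂ) (hT : T = Matrix.of fun i j => x i * conj (y j))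
    (h : inner ℂ (frobVec T) (frobVec A) = inner ℂ (frobVec T) (frobVec T)) :
    ‖frobVec T‖ ≤ ‖A‖ := by
  have h1 : ‖frobVec T‖ * ‖frobVec T‖ ≤ ‖A‖ * ‖frobVec T‖ := by
    have h2 : ‖frobVec T‖ * ‖frobVec T‖ = ‖inner ℂ (frobVec T) (frobVec A)‖ := by
      rw [h, inner_self_eq_norm_sq_to_K]; simp [sq]
    rw [h2, inner_frob_rank_one x y T A hT, norm_frob_rank_one x y T hT]
    refine (norm_inner_le_norm _ _).trans ?_
    have := (Matrix.toEuclideanCLM (n := κ) (𝕜 := ℂ) A).le_opNorm (WithLp.toLp 2 y)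
    rw [← Matrix.cstar_norm_def] at this
    calc _ ≤ _ := mul_le_mul_of_nonneg_left this (norm_nonneg _)
      _ = _ := by ring
  rcases (norm_nonneg (frobVec T)).eq_or_lt with h0 | h0
  · rw [← h0]; exact norm_nonneg _
  · exact le_of_mul_le_mul_right h1 h0

lemma frobVec_add_smul {κ : Type*} (T S : Matrix κ κ ℂ) (α : ℂ) :
    frobVec (T + α • S) = frobVec T + α • frobVec S := by
  ext p; simp [frobVec]

lemma inner_zero_of_norm_le {E : Type*} [NormedAddCommGroup E] [InnerProductSpace ℂ E] (u v : E)
    (h : ∀ α : ℂ, ‖u‖ ≤ ‖u + α • v‖) : inner ℂ u v = 0 := by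
  by_cases hv : v = 0
  · simp [hv]
  have hv' : 0 < ‖v‖ := norm_pos_iff.2 hv
  set α : ℂ := -(inner ℂ v u) / ((‖v‖ : ℂ) ^ 2) with hα
  have hvc : (‖v‖ : ℂ) ≠ 0 := by exact_mod_cast hv'.ne'
  have horth : inner ℂ v (u + α • v) = 0 := by
    rw [inner_add_right, inner_smul_right, inner_self_eq_norm_sq_to_K, hα]
    simp only [Complex.coe_algebraMap]
    field_simp
    simp
  have hpyth : ‖u‖ ^ 2 = ‖u + α • v‖ ^ 2 + ‖α • v‖ ^ 2 := by
    have := norm_sub_sq (𝕜 := ℂ) (u + α • v) (α • v)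
    rw [add_sub_cancel_right, inner_smul_right, ← inner_conj_symm, horth] at this
    simpa using this
  have h1 : ‖u‖ ^ 2 ≤ ‖u + α • v‖ ^ 2 := by gcongr; exact h α
  have h2 : ‖α • v‖ ^ 2 = 0 := le_antisymm (by linarith) (by positivity)
  have h3 : α = 0 := by simpa [hv] using h2
  rw [← inner_conj_symm]
  have : inner ℂ v u = 0 := by
    rw [hα] at h3; simpa [hv] using h3
  simp [this]

lemma bj_iff_s12 {κ : Type*} [Fintype κ] [DecidableEq κ] (x y : κ → ℂ)
    (T S : Matrix κ κ ℂ) (hT : T = Matrix.of fun i j => x i * conj (y j)) :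
    (∀ α : ℂ, ‖T + α • S‖ ≥ ‖T‖) ↔ inner ℂ (frobVec T) (frobVec S) = 0 := by
  constructor
  · intro h
    refine inner_zero_of_norm_le _ _ fun α => ?_
    rw [← frobVec_add_smul]
    exact ((frob_le_of_inner x y T T hT rfl).trans (h α)).trans (l2_le_frob _)
  · intro h α
    refine (l2_le_frob T).trans (frob_le_of_inner x y T _ hT ?_)
    rw [frobVec_add_smul, inner_add_right, inner_smul_right, h]
    simp

lemma inner_frob_kron {n m : ℕ} (T₁ S₁ : Matrix (Fin n) (Fin n) ℂ)
    (T₂ S₂ : Matrix (Fin m) (Fin m) ℂ) :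
    inner ℂ (frobVec (T₁ ⊗ₖ T₂)) (frobVec (S₁ ⊗ₖ S₂)) =
      inner ℂ (frobVec T₁) (frobVec S₁) * inner ℂ (frobVec T₂) (frobVec S₂) := by
  simp only [PiLp.inner_apply, Finset.sum_mul_sum]
  simp only [Fintype.sum_prod_type]
  refine Finset.sum_congr rfl fun i _ => ?_
  simp only [frobVec, Matrix.kroneckerMap_apply, RCLike.inner_apply, map_mul]
  rw [Finset.sum_comm]
  refine Finset.sum_congr rfl fun k _ => ?_
  refine Finset.sum_congr rfl fun j _ => ?_
  refine Finset.sum_congr rfl fun l _ => ?_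
  ring


/-- For rank-one complex matrices `T₁ = x₁ y₁* ∈ Mₙ(ℂ)`,
`T₂ = x₂ y₂* ∈ Mₘ(ℂ)`, `S₁ = z₁ w₁* ∈ Mₙ(ℂ)`, `S₂ = z₂ w₂* ∈ Mₘ(ℂ)` and the spectral
norm, if the Kronecker product `T₁ ⊗ T₂` is Birkhoff-James orthogonal to `S₁ ⊗ S₂` in
`M_{nm}(ℂ)`, then `T₁ ⊥_BJ S₁` in `Mₙ(ℂ)` or `T₂ ⊥_BJ S₂` in `Mₘ(ℂ)`. -/
theorem stmt12
    {n m : ℕ} (hn : 0 < n) (hm : 0 < m)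
    (x₁ y₁ z₁ w₁ : Fin n → ℂ) (x₂ y₂ z₂ w₂ : Fin m → ℂ)
    (T₁ S₁ : Matrix (Fin n) (Fin n) ℂ) (T₂ S₂ : Matrix (Fin m) (Fin m) ℂ)
    (hT₁ : T₁ = Matrix.of fun i j => x₁ i * conj (y₁ j))
    (hT₂ : T₂ = Matrix.of fun i j => x₂ i * conj (y₂ j))
    (hS₁ : S₁ = Matrix.of fun i j => z₁ i * conj (w₁ j))
    (hS₂ : S₂ = Matrix.of fun i j => z₂ i * conj (w₂ j))
    (hBJ : ∀ α : ℂ, ‖T₁ ⊗ₖ T₂ + α • (S₁ ⊗ₖ S₂)‖ ≥ ‖T₁ ⊗ₖ T₂‖) :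
    (∀ α : ℂ, ‖T₁ + α • S₁‖ ≥ ‖T₁‖) ∨ (∀ α : ℂ, ‖T₂ + α • S₂‖ ≥ ‖T₂‖) := by
  have hT : T₁ ⊗ₖ T₂ = Matrix.of fun (i j : Fin n × Fin m) =>
      (fun p : Fin n × Fin m => x₁ p.1 * x₂ p.2) i *
        conj ((fun p : Fin n × Fin m => y₁ p.1 * y₂ p.2) j) := by
    subst hT₁ hT₂
    ext i j
    simp only [Matrix.kroneckerMap_apply, Matrix.of_apply, map_mul]
    ring
  rw [bj_iff_s12 _ _ _ _ hT, inner_frob_kron, mul_eq_zero] at hBJ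
  rw [bj_iff_s12 _ _ _ _ hT₁, bj_iff_s12 _ _ _ _ hT₂]
  exact hBJ
end
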